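/- Let f_1 and f_2 be self-usage utility functions with f_1'(x) > f_2'(x) for all x ∈ [0,1), and let 0 ≤ p < q < min(f_1'(0), f_2'(0)). Let s_{2a} ∈ (0,1) satisfy f_2'(1−s_{2a}) = q, and for i = 1, 2 let s_{ib} ∈ [0,1) satisfy f_i'(1−s_{ib}) = p (so s_{1b} < s_{2b}). Then (q−p)·s_{2a} − (q−p)·(s_{1b} + s_{2b})/2 − (f_2(1−s_{2b}) − f_2(1−s_{2a}) − p·(s_{2a} − s_{2b})) > 0. (This is the strict positivity of the threshold B_a·t_a chosen by a platform running a linear loyalty program with bonus B_a = q − p against a competitor paying p and offering a sign-up bonus of at most (q−p)(s_{1b} + s_{2b})/2, guaranteeing the loyalty-program platform strictly positive revenue.) -/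

import Mathlib

/-!
Let `U_r s = f2 (1 - s) + r * s` be the payoff of owner 2 at linear price `r`. The condition
`f2' (1 - s2a) = q` makes `s2a` the unique maximizer of the strictly concave `U_q`. As
`U_q s = U_p s + (q - p) * s`, the inequality `U_q s2b < U_q s2a` says that
`U_p s2b - U_p s2a < (q - p) * (s2a - s2b)`. The threshold payoff therefore exceeds
`(q - p) * (s2b - s1b) / 2`, which is nonnegative because owner 2, whose marginal self-usage
utility is lower, shares at least as much as owner 1 at the common price `p`.
-/

/-- A self-usage utility function `f` with derivative `f'`:
differentiable on `[0,1]`, strictly increasing on `[0,1]`,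
strictly concave on `[0,1]` (with `f'` strictly decreasing), and `f' 1 = 0`. -/
def SelfUsage (f f' : ℝ → ℝ) : Prop :=
  (∀ x ∈ Set.Icc (0:ℝ) 1, HasDerivWithinAt f (f' x) (Set.Icc (0:ℝ) 1) x) ∧
  StrictMonoOn f (Set.Icc (0:ℝ) 1) ∧
  StrictConcaveOn ℝ (Set.Icc (0:ℝ) 1) f ∧
  StrictAntiOn f' (Set.Icc (0:ℝ) 1) ∧
  f' 1 = 0

section StrictConcave

variable {S : Set ℝ} {f : ℝ → ℝ}

lemma lt_tangentLine_of_strictConcaveOn {x y m : ℝ} (hf : StrictConcaveOn ℝ S f) (hx : x ∈ S)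
    (hy : y ∈ S) (hyx : y ≠ x) (hm : HasDerivWithinAt f m S x) :
    f y < f x + m * (y - x) := by
  rcases hyx.lt_or_gt with hlt | hgt
  · have hslope := hf.lt_slope_of_hasDerivWithinAt hy hx hlt hm
    rw [slope_def_field, lt_div_iff₀ (sub_pos.2 hlt)] at hslope
    linarith
  · have hslope := hf.slope_lt_of_hasDerivWithinAt hx hy hgt hm
    rw [slope_def_field, div_lt_iff₀ (sub_pos.2 hgt)] at hslope
    linarith

lemma strictAntiOn_of_strictConcaveOn_of_hasDerivWithinAt {f' : ℝ → ℝ}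
    (hf : StrictConcaveOn ℝ S f) (hf' : ∀ x ∈ S, HasDerivWithinAt f (f' x) S x) :
    StrictAntiOn f' S :=
  fun x hx y hy hxy =>
    (hf.lt_slope_of_hasDerivWithinAt hx hy hxy (hf' y hy)).trans
      (hf.slope_lt_of_hasDerivWithinAt hx hy hxy (hf' x hx))

end StrictConcave

/-- The payoff of an owner with self-usage utility `f` who shares the fraction `s` of a unit
endowment at the linear price `r` and keeps `1 - s` for self-usage. -/
def ownerPayoff (f : ℝ → ℝ) (r s : ℝ) : ℝ :=
  f (1 - s) + r * s

lemma ownerPayoff_lt_of_hasDerivWithinAt {S : Set ℝ} {f : ℝ → ℝ} {r s t : ℝ}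
    (hf : StrictConcaveOn ℝ S f) (hs : 1 - s ∈ S) (ht : 1 - t ∈ S) (hts : t ≠ s)
    (hr : HasDerivWithinAt f r S (1 - s)) : ownerPayoff f r t < ownerPayoff f r s := by
  have htangent := lt_tangentLine_of_strictConcaveOn hf hs ht (sub_right_injective.ne hts) hr
  unfold ownerPayoff
  linarith

theorem LLP_vs_signup_both_owners_positive_general {S : Set ℝ} {f f' : ℝ → ℝ}
    (hf : StrictConcaveOn ℝ S f) (hf' : ∀ x ∈ S, HasDerivWithinAt f (f' x) S x)
    {p q s2a s1b s2b : ℝ} (hpq : p < q)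
    (h2a : 1 - s2a ∈ S) (h1b : 1 - s1b ∈ S) (h2b : 1 - s2b ∈ S)
    (hd2a : f' (1 - s2a) = q) (hd1b : f' (1 - s1b) ≤ p) (hd2b : f' (1 - s2b) = p) :
    0 < (q - p) * s2a - (q - p) * (s1b + s2b) / 2
        - (f (1 - s2b) - f (1 - s2a) - p * (s2a - s2b)) := by
  have hsharing : s1b ≤ s2b := by
    have hanti := strictAntiOn_of_strictConcaveOn_of_hasDerivWithinAt hf hf'
    exact (sub_le_sub_iff_left 1).1 <| (hanti.le_iff_ge h1b h2b).1 (hd1b.trans_eq hd2b.symm)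
  have hne : s2b ≠ s2a := by
    rintro rfl
    exact hpq.ne (hd2b.symm.trans hd2a)
  have hpayoff : ownerPayoff f q s2b < ownerPayoff f q s2a :=
    ownerPayoff_lt_of_hasDerivWithinAt hf h2a h2b hne (hd2a ▸ hf' _ h2a)
  have hbonus : 0 ≤ (q - p) * (s2b - s1b) / 2 :=
    div_nonneg (mul_nonneg (sub_nonneg.2 hpq.le) (sub_nonneg.2 hsharing)) zero_le_two
  calc
    0 ≤ (q - p) * (s2b - s1b) / 2 := hbonus
    _ < (q - p) * (s2b - s1b) / 2 + (ownerPayoff f q s2a - ownerPayoff f q s2b) :=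
      lt_add_of_pos_right _ (sub_pos.2 hpayoff)
    _ = (q - p) * s2a - (q - p) * (s1b + s2b) / 2
        - (f (1 - s2b) - f (1 - s2a) - p * (s2a - s2b)) := by
      unfold ownerPayoff
      ring

/-- strict positivity of the threshold payoff B_a·t_a of the
linear-loyalty-program platform against a competitor whose sign-up bonus is at
most (q−p)(s_{1b}+s_{2b})/2. -/
theorem LLP_vs_signup_both_owners_positive
    (f1 f1' f2 f2' : ℝ → ℝ) (hf1 : SelfUsage f1 f1') (hf2 : SelfUsage f2 f2')
    (horder : ∀ x ∈ Set.Ico (0:ℝ) 1, f2' x < f1' x)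
    (p q : ℝ) (hp : 0 ≤ p) (hpq : p < q) (hq : q < min (f1' 0) (f2' 0))
    (s2a : ℝ) (h2a : s2a ∈ Set.Ioo (0:ℝ) 1) (hd2a : f2' (1 - s2a) = q)
    (s1b s2b : ℝ) (h1b : s1b ∈ Set.Ico (0:ℝ) 1) (h2b : s2b ∈ Set.Ico (0:ℝ) 1)
    (hd1b : f1' (1 - s1b) = p) (hd2b : f2' (1 - s2b) = p) :
    0 < (q - p) * s2a - (q - p) * (s1b + s2b) / 2
        - (f2 (1 - s2b) - f2 (1 - s2a) - p * (s2a - s2b)) := by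
  have hmarginal : ∀ x ∈ Set.Icc (0 : ℝ) 1, f2' x ≤ f1' x := by
    rw [← Set.Ico_insert_right zero_le_one, Set.forall_mem_insert]
    exact ⟨(hf2.2.2.2.2.trans hf1.2.2.2.2.symm).le, fun x hx => (horder x hx).le⟩
  have h1b_usage := Set.Icc.one_sub_mem (Set.Ico_subset_Icc_self h1b)
  exact LLP_vs_signup_both_owners_positive_general hf2.2.2.1 hf2.1 hpq
    (Set.Icc.one_sub_mem (Set.Ioo_subset_Icc_self h2a)) h1b_usage
    (Set.Icc.one_sub_mem (Set.Ico_subset_Icc_self h2b))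
    hd2a ((hmarginal _ h1b_usage).trans_eq hd1b) hd2b
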